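/- Fix ε ∈ (0,1]. Let G be a countable group and μ a symmetric probability measure on G such that the bounded self-adjoint convolution operator T_μ f(x) = ∑_{y∈G} f(y) μ(y⁻¹x) on ℓ²(G) has spectrum contained in [−1+ε, 1]. Let ‖·‖ be a quasi-norm on G (i.e. ‖gh‖ ≤ A(‖g‖+‖h‖) for some A ≥ 1, ‖g⁻¹‖ = ‖g‖, ‖e‖ = 0), let ρ : (0,∞) → (0,∞) be continuous and increasing, and suppose μ satisfies the pointwise pseudo-Poincaré inequality: there is C > 0 such that ∑_{x∈G} |f(xg) − f(x)|² ≤ C ρ(‖g‖) E_μ(f,f) for every finitely supported f : G → ℝ and every g ∈ G. Then there exists a constant C_ε such that for all positive integers u, v, all integers m ≥ 0, with n = u + 2v, and all x, y ∈ G: |μ^{(n+m)}(xy) − μ^{(n)}(x)| ≤ C_ε ( m/u + √(C ρ(‖y‖)/u) ) μ^{(2v)}(e). -/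

import Mathlib

/-!
The convolution powers are orbits of the operator `T`: `T ^ k δ_w (z) = μ^(k) (w⁻¹ z)`
(`pow_pointMass`), and `‖T ^ v δ_w‖² = μ^(2v) (e)` for each `w`. Splitting off `T ^ v` on both sides
of an inner product and applying Cauchy-Schwarz reduces the estimate to operator bounds.

* Time increment: `μ^(n+m) (x) - μ^(n) (x) = ⟨(T ^ m - 1) T ^ u T ^ v δ_e, T ^ v δ_x⟩`, so the bound
  `‖(1 - T) T ^ u‖ ≤ 2 / (ε u)` suffices (`GapOp.time_diff_le`).
* Space increment: `μ^(n+m) (x y) - μ^(n+m) (x)` is bounded by `μ^(2v) (e) ^ (1/2)` times the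
  `ℓ²` norm of the increment by `y` of `F = T ^ (u + v + m) δ_e`. The pseudo-Poincaré inequality,
  extended to `ℓ²` (`pseudoPoincare_l2`), bounds its square by `C ρ(‖y‖) ⟨(1 - T) F, F⟩`, and
  `⟨(1 - T) T ^ (2u) g, g⟩ ≤ ‖g‖² / (ε u)` (`GapOp.energy_le`).

Both operator bounds are obtained without functional calculus. The spectral hypothesis gives
`-1 + ε ≤ T ≤ 1` as quadratic forms (`gapOp_of_spectrum`). Hence the energies
`S k = ⟨(1 - T) T ^ (2k) g, g⟩` satisfy `ε S k ≤ ‖T ^ k g‖² - ‖T ^ (k+1) g‖²` and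
`ε ‖(1 - T) T ^ k g‖² ≤ S k - S (k+1)`. Telescoping the first inequality gives `∑ S k ≤ ‖g‖² / ε`,
and summing the second with weights `k + 1` gives `∑ (k + 1) ‖(1 - T) T ^ k g‖² ≤ ‖g‖² / ε²`.
The sequences `S k` and `‖(1 - T) T ^ k g‖` are decreasing, which gives the decay rates.
-/

open scoped BigOperators Classical

noncomputable section

/-- A symmetric probability measure on a discrete group `G`. -/
def IsSymmProb {G : Type*} [Group G] (μ : G → ℝ) : Prop :=
  (∀ g, 0 ≤ μ g) ∧ Summable μ ∧ (∑' g, μ g) = 1 ∧ (∀ g, μ g⁻¹ = μ g)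

/-- Convolution powers of `μ` : `convPow μ 0 = δ_e`, `convPow μ (n+1) = (convPow μ n) * μ`. -/
def convPow {G : Type*} [Group G] (μ : G → ℝ) : ℕ → G → ℝ
  | 0 => fun x => if x = 1 then 1 else 0
  | n + 1 => fun x => ∑' y, convPow μ n y * μ (y⁻¹ * x)

/-- The Dirichlet form of `μ`. -/
def dirichletForm {G : Type*} [Group G] (μ : G → ℝ) (f : G → ℝ) : ℝ :=
  (1 / 2) * ∑' q : G × G, (f (q.1 * q.2) - f q.1) ^ 2 * μ q.2

/-- The spectral profile `Λ_{2,G,μ}`. -/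
def spectralProfile {G : Type*} [Group G] (μ : G → ℝ) (v : ℝ) : ℝ :=
  sInf { r : ℝ | ∃ f : G → ℝ, 1 ≤ (Function.support f).ncard ∧
    ((Function.support f).ncard : ℝ) ≤ v ∧
    r = dirichletForm μ f / ∑' x, (f x) ^ 2 }

/-- Word length with respect to a set `S` of generators. -/
def wordLength {G : Type*} [Group G] (S : Set G) (g : G) : ℕ :=
  sInf { n : ℕ | ∃ l : List G, l.length = n ∧ (∀ x ∈ l, x ∈ S) ∧ l.prod = g }

/-- `F` is regularly varying at infinity of index `γ`. -/
def RegVaryAt (F : ℝ → ℝ) (γ : ℝ) : Prop :=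
  ∀ l : ℝ, 0 < l →
    Filter.Tendsto (fun t => F (l * t) / F t) Filter.atTop (nhds (l ^ γ))

/-- `G` is finitely generated of polynomial volume growth. -/
def HasPolyGrowth (G : Type*) [Group G] : Prop :=
  ∃ (S : Finset G) (D c C : ℝ), (∀ s ∈ S, s⁻¹ ∈ S) ∧
    Subgroup.closure (S : Set G) = ⊤ ∧ 0 < c ∧ c ≤ C ∧
    ∀ r : ℝ, 1 ≤ r →
      c * r ^ D ≤ (({g : G | (wordLength (S : Set G) g : ℝ) ≤ r}).ncard : ℝ) ∧
      (({g : G | (wordLength (S : Set G) g : ℝ) ≤ r}).ncard : ℝ) ≤ C * r ^ D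

/-- A norm on the group `G`. -/
def IsGroupNorm {G : Type*} [Group G] (N : G → ℝ) : Prop :=
  (∀ g, 0 ≤ N g) ∧ N 1 = 0 ∧ (∀ g, N g⁻¹ = N g) ∧ ∀ g h, N (g * h) ≤ N g + N h

/-- A quasi-norm on the group `G`, with quasi-triangle constant `A`. -/
def IsQuasiNorm {G : Type*} [Group G] (N : G → ℝ) (A : ℝ) : Prop :=
  1 ≤ A ∧ (∀ g, 0 ≤ N g) ∧ N 1 = 0 ∧ (∀ g, N g⁻¹ = N g) ∧
    ∀ g h, N (g * h) ≤ A * (N g + N h)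

/-- `f ⪯ g` in a neighborhood of infinity. -/
def Preceq (f g : ℝ → ℝ) : Prop :=
  ∃ c₁ c₂ M : ℝ, 0 < c₁ ∧ 0 < c₂ ∧ ∀ x, M ≤ x → f x ≤ c₁ * g (c₂ * x)

/-- `Φ(t) = t²/∫₀ᵗ 2s/φ(s) ds` for `t ≥ 1`, extended linearly on `[0,1]` with `Φ(0)=0`. -/
def PhiOf (φ : ℝ → ℝ) (t : ℝ) : ℝ :=
  if 1 ≤ t then t ^ 2 / (intervalIntegral (fun s => 2 * s / φ s) 0 t MeasureTheory.volume)
  else t * (1 / (intervalIntegral (fun s => 2 * s / φ s) 0 1 MeasureTheory.volume))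

/-- Generalized right-continuous inverse `F⁻¹(v) = inf {t ≥ 1 : F(t) ≥ v}`. -/
def Finv (F : ℝ → ℝ) (v : ℝ) : ℝ := sInf { t : ℝ | 1 ≤ t ∧ v ≤ F t }

/-- The set of products of exactly `Q` elements of `U`. -/
def prodSet {G : Type*} [Group G] (Q : ℕ) (U : Set G) : Set G :=
  { g | ∃ l : List G, l.length = Q ∧ (∀ x ∈ l, x ∈ U) ∧ l.prod = g }

open scoped RealInnerProductSpace

/-! ### Self-adjoint operators with a spectral gap at `-1` -/

/-- The spectrum of a symmetric operator controls its quadratic form from below. If the largest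
lower bound `c` of the form were below `a`, then `B = T - c` would be positive and invertible, so
`‖g‖² ≲ ‖B g‖² ≲ ⟪B g, g⟫`, and `c` could be increased. -/
theorem rayleigh_lower {H : Type*} [NormedAddCommGroup H] [InnerProductSpace ℝ H]
    (T : H →L[ℝ] H) (hT : ∀ x y, ⟪T x, y⟫ = ⟪x, T y⟫) (a : ℝ)
    (hs : ∀ c < a, c ∉ spectrum ℝ T) (f : H) : a * ‖f‖ ^ 2 ≤ ⟪T f, f⟫ := by
  set P : Set ℝ := {c | ∀ g : H, c * ‖g‖ ^ 2 ≤ ⟪T g, g⟫} with hP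
  suffices a ∈ P from this f
  by_contra ha
  have hne : P.Nonempty := by
    refine ⟨-‖T‖, fun g => ?_⟩
    have h1 := abs_real_inner_le_norm (T g) g
    have h2 := T.le_opNorm g
    have h3 := neg_abs_le ⟪T g, g⟫
    nlinarith [norm_nonneg g]
  have hub : ∀ c ∈ P, c ≤ a := by
    intro c hc
    by_contra! h
    exact ha fun g => (mul_le_mul_of_nonneg_right h.le (by positivity)).trans (hc g)
  set c := sSup P with hc
  have hcP : c ∈ P := by
    intro g
    rcases eq_or_ne g 0 with rfl | hg
    · simp
    have hg' : 0 < ‖g‖ ^ 2 := by positivity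
    rw [← le_div_iff₀ hg']
    refine csSup_le hne fun d hd => ?_
    rw [le_div_iff₀ hg']
    exact hd g
  have hca : c < a := lt_of_le_of_ne (csSup_le hne hub) fun h => ha (h ▸ hcP)
  obtain ⟨w, hw⟩ := spectrum.notMem_iff.1 (hs c hca)
  set B : H → H := fun g => T g - c • g with hB
  have hBin : ∀ g, ⟪B g, g⟫ = ⟪T g, g⟫ - c * ‖g‖ ^ 2 := by
    intro g
    simp [hB, inner_sub_left, real_inner_smul_left]
  have hBpos : ∀ g, 0 ≤ ⟪B g, g⟫ := fun g => by rw [hBin]; linarith [hcP g]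
  set M := ‖T‖ + |c| + 1 with hM
  have hMpos : 0 < M := by positivity
  have hBnorm : ∀ g, ‖B g‖ ≤ M * ‖g‖ := by
    intro g
    calc ‖B g‖ ≤ ‖T g‖ + ‖c • g‖ := norm_sub_le _ _
      _ ≤ ‖T‖ * ‖g‖ + |c| * ‖g‖ := by
        rw [norm_smul, Real.norm_eq_abs]; gcongr; exact T.le_opNorm g
      _ ≤ M * ‖g‖ := by rw [hM]; nlinarith [norm_nonneg g]
  -- Cauchy-Schwarz for the form of the positive operator `B`, tested on `g - M⁻¹ • B g`
  have hBsq : ∀ g, ‖B g‖ ^ 2 ≤ M * ⟪B g, g⟫ := by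
    intro g
    have h0 := hBpos (g - M⁻¹ • B g)
    have hsymm : ⟪B (B g), g⟫ = ‖B g‖ ^ 2 := by
      rw [← real_inner_self_eq_norm_sq]
      simp only [hB, inner_sub_left, inner_sub_right, real_inner_smul_left, real_inner_smul_right,
        map_sub, map_smul, hT]
      ring
    have hlin : B (g - M⁻¹ • B g) = B g - M⁻¹ • B (B g) := by
      simp only [hB, map_sub, map_smul, smul_sub, smul_smul]
      module
    rw [hlin, inner_sub_left, inner_sub_right, inner_sub_right, real_inner_smul_left,
      real_inner_smul_left, real_inner_smul_right, real_inner_smul_right, hsymm,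
      real_inner_self_eq_norm_sq] at h0
    have h1 : ⟪B (B g), B g⟫ ≤ M * ‖B g‖ ^ 2 := by
      have := real_inner_le_norm (B (B g)) (B g)
      nlinarith [hBnorm (B g), norm_nonneg (B g)]
    have h2 : M⁻¹ * (M⁻¹ * ⟪B (B g), B g⟫) ≤ M⁻¹ * ‖B g‖ ^ 2 := by
      calc M⁻¹ * (M⁻¹ * ⟪B (B g), B g⟫) ≤ M⁻¹ * (M⁻¹ * (M * ‖B g‖ ^ 2)) := by gcongr
        _ = _ := by field_simp
    have h3 : M⁻¹ * ‖B g‖ ^ 2 ≤ ⟪B g, g⟫ := by linarith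
    rwa [inv_mul_le_iff₀ hMpos] at h3
  set W := ‖(↑w⁻¹ : H →L[ℝ] H)‖ + 1 with hW
  have hWpos : 0 < W := by positivity
  have hinv : ∀ g, ‖g‖ ≤ W * ‖B g‖ := by
    intro g
    have h1 : (↑w⁻¹ : H →L[ℝ] H) (-(B g)) = g := by
      have : -(B g) = (w : H →L[ℝ] H) g := by
        rw [hw]; simp [hB, Algebra.algebraMap_eq_smul_one]
      rw [this, ← mul_apply_eq_comp, Units.inv_mul]; rfl
    calc ‖g‖ = ‖(↑w⁻¹ : H →L[ℝ] H) (-(B g))‖ := by rw [h1]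
      _ ≤ ‖(↑w⁻¹ : H →L[ℝ] H)‖ * ‖-(B g)‖ := ContinuousLinearMap.le_opNorm _ _
      _ ≤ W * ‖B g‖ := by rw [norm_neg]; gcongr; linarith
  have hbig : c + (W ^ 2 * M)⁻¹ ∈ P := by
    intro g
    have h1 : ‖g‖ ^ 2 ≤ W ^ 2 * M * ⟪B g, g⟫ := by
      calc ‖g‖ ^ 2 ≤ (W * ‖B g‖) ^ 2 := by gcongr; exact hinv g
        _ = W ^ 2 * ‖B g‖ ^ 2 := by ring
        _ ≤ W ^ 2 * (M * ⟪B g, g⟫) := by gcongr; exact hBsq g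
        _ = _ := by ring
    rw [← inv_mul_le_iff₀ (by positivity), hBin] at h1
    linarith
  have : c + (W ^ 2 * M)⁻¹ ≤ c := le_csSup ⟨a, hub⟩ hbig
  have : 0 < (W ^ 2 * M)⁻¹ := by positivity
  linarith

/-- `T` is symmetric and its quadratic form lies between `-1 + ε` and `1`: the spectral gap at `-1`
expressed through the numerical range. -/
structure GapOp {H : Type*} [NormedAddCommGroup H] [InnerProductSpace ℝ H]
    (T : H →L[ℝ] H) (ε : ℝ) : Prop where
  symm : ∀ x y, ⟪T x, y⟫ = ⟪x, T y⟫
  lower : ∀ f, (-1 + ε) * ‖f‖ ^ 2 ≤ ⟪T f, f⟫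
  upper : ∀ f, ⟪T f, f⟫ ≤ ‖f‖ ^ 2

namespace GapOp
variable {H : Type*} [NormedAddCommGroup H] [InnerProductSpace ℝ H] {T : H →L[ℝ] H} {ε : ℝ}

/-- `(1 - t)(1 + t - ε) ≥ 0` in operator form, from
`(b - t)(t - a)(b - a) = (b - t)² (t - a) + (t - a)² (b - t)` with `a = -1 + ε`, `b = 1`. -/
theorem gap (h : GapOp T ε) (hε1 : ε ≤ 1) (f : H) :
    ε * (‖f‖ ^ 2 - ⟪T f, f⟫) ≤ ‖f‖ ^ 2 - ‖T f‖ ^ 2 := by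
  have h1 := h.lower (f - T f)
  have h2 := h.upper (T f + (1 - ε) • f)
  have e1 : ⟪f, T f⟫ = ⟪T f, f⟫ := (h.symm _ _).symm
  have e2 : ⟪T (T f), f⟫ = ⟪T f, T f⟫ := h.symm _ _
  simp only [← real_inner_self_eq_norm_sq, inner_sub_left, inner_sub_right, inner_add_left,
    inner_add_right, real_inner_smul_left, real_inner_smul_right, map_sub, map_add, map_smul,
    e1, e2] at h1 h2 ⊢
  have h3 : 0 ≤ (2 - ε) * (⟪f, f⟫ - ⟪T f, T f⟫ - ε * (⟪f, f⟫ - ⟪T f, f⟫)) := by linarith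
  have h4 := nonneg_of_mul_nonneg_right h3 (by linarith)
  linarith

theorem apply_norm_le (h : GapOp T ε) (hε : 0 < ε) (hε1 : ε ≤ 1) (f : H) : ‖T f‖ ≤ ‖f‖ := by
  have h1 := h.gap hε1 f
  have h2 := h.upper f
  have : 0 ≤ ε * (‖f‖ ^ 2 - ⟪T f, f⟫) := mul_nonneg hε.le (by linarith)
  exact (sq_le_sq₀ (norm_nonneg _) (norm_nonneg _)).1 (by linarith)

theorem pow_norm_le (h : GapOp T ε) (hε : 0 < ε) (hε1 : ε ≤ 1) (k : ℕ) (f : H) :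
    ‖(T ^ k) f‖ ≤ ‖f‖ := by
  induction k with
  | zero => simp
  | succ k ih =>
    rw [pow_succ', mul_apply_eq_comp]
    exact (h.apply_norm_le hε hε1 _).trans ih

theorem symm_pow (h : GapOp T ε) (k : ℕ) (x y : H) : ⟪(T ^ k) x, y⟫ = ⟪x, (T ^ k) y⟫ := by
  induction k generalizing x y with
  | zero => simp
  | succ k ih =>
    rw [pow_succ, mul_apply_eq_comp, ih, h.symm, ← mul_apply_eq_comp,
      ← pow_succ', pow_succ]

/-- `ε (1 - t)² ≤ (1 - t)(1 - t²)` in operator form. -/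
theorem sq_le_diff (h : GapOp T ε) (f : H) :
    ε * ‖f - T f‖ ^ 2 ≤ (‖f‖ ^ 2 - ⟪T f, f⟫) - (‖T f‖ ^ 2 - ⟪T (T f), T f⟫) := by
  have h1 := h.lower (f - T f)
  have e1 : ⟪f, T f⟫ = ⟪T f, f⟫ := (h.symm _ _).symm
  have e2 : ⟪T (T f), f⟫ = ⟪T f, T f⟫ := h.symm _ _
  simp only [← real_inner_self_eq_norm_sq, inner_sub_left, inner_sub_right, map_sub,
    e1, e2] at h1 ⊢
  linarith

/-- The form `⟨(1 - T) T^k f, T^k f⟩`. -/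
def energy (T : H →L[ℝ] H) (f : H) (k : ℕ) : ℝ := ‖(T ^ k) f‖ ^ 2 - ⟪T ((T ^ k) f), (T ^ k) f⟫

/-- The energy drop in one step controls the increment of `T ^ k f`. -/
theorem energy_step (h : GapOp T ε) (f : H) (k : ℕ) :
    ε * ‖(T ^ k) f - (T ^ (k + 1)) f‖ ^ 2 ≤ energy T f k - energy T f (k + 1) := by
  have := h.sq_le_diff ((T ^ k) f)
  simpa only [energy, pow_succ', mul_apply_eq_comp] using this

theorem energy_antitone (h : GapOp T ε) (hε : 0 < ε) (f : H) : Antitone (energy T f) := by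
  refine antitone_nat_of_succ_le fun k => ?_
  have h1 := h.energy_step f k
  have : 0 ≤ ε * ‖(T ^ k) f - (T ^ (k + 1)) f‖ ^ 2 := by positivity
  linarith

/-- Each energy is at most `ε⁻¹` times the drop of `‖T ^ k f‖²`, and these drops telescope. -/
theorem sum_energy_le (h : GapOp T ε) (hε1 : ε ≤ 1) (f : H) (u : ℕ) :
    ε * ∑ k ∈ Finset.range u, energy T f k ≤ ‖f‖ ^ 2 := by
  have : ε * ∑ k ∈ Finset.range u, energy T f k ≤ ‖f‖ ^ 2 - ‖(T ^ u) f‖ ^ 2 := by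
    induction u with
    | zero => simp
    | succ u ih =>
      have := h.gap hε1 ((T ^ u) f)
      rw [Finset.sum_range_succ, pow_succ' T u, mul_apply_eq_comp, mul_add, energy]
      linarith
  nlinarith [norm_nonneg ((T ^ u) f)]

theorem energy_nonneg (h : GapOp T ε) (f : H) (k : ℕ) : 0 ≤ energy T f k := by
  have := h.upper ((T ^ k) f)
  rw [energy]; linarith

/-- The energy decays like `1 / (ε u)`, because it is decreasing and summable. -/
theorem energy_le (h : GapOp T ε) (hε : 0 < ε) (hε1 : ε ≤ 1) (f : H) (u : ℕ) :
    ε * (u * energy T f u) ≤ ‖f‖ ^ 2 := by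
  refine le_trans ?_ (h.sum_energy_le hε1 f u)
  gcongr
  calc (u : ℝ) * energy T f u = ∑ k ∈ Finset.range u, energy T f u := by simp
    _ ≤ _ := Finset.sum_le_sum fun k hk =>
      h.energy_antitone hε f (Finset.mem_range.1 hk).le

theorem increment_antitone (h : GapOp T ε) (hε : 0 < ε) (hε1 : ε ≤ 1) (f : H) :
    Antitone fun k => ‖(T ^ k) f - (T ^ (k + 1)) f‖ := by
  refine antitone_nat_of_succ_le fun k => ?_
  have := h.apply_norm_le hε hε1 ((T ^ k) f - (T ^ (k + 1)) f)
  rwa [map_sub, ← mul_apply_eq_comp, ← mul_apply_eq_comp, ← pow_succ',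
    ← pow_succ'] at this

/-- `‖(1 - T) T ^ u f‖` decays like `2 / (ε u)`. -/
theorem increment_le (h : GapOp T ε) (hε : 0 < ε) (hε1 : ε ≤ 1) (f : H) (u : ℕ) :
    u * ‖(T ^ u) f - (T ^ (u + 1)) f‖ ≤ 2 / ε * ‖f‖ := by
  set D := ‖(T ^ u) f - (T ^ (u + 1)) f‖ with hD
  -- weighted telescoping: `∑ (k + 1) (S k - S (k + 1)) ≤ ∑ S k`
  have key : ∀ j ≤ u, ε * (∑ k ∈ Finset.range j, ((k : ℝ) + 1)) * D ^ 2 ≤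
      ∑ k ∈ Finset.range j, energy T f k - j * energy T f j := by
    intro j
    induction j with
    | zero => simp
    | succ j ih =>
      intro hj
      have h1 := ih (by omega)
      have h2 := h.energy_step f j
      have h3 : D ^ 2 ≤ ‖(T ^ j) f - (T ^ (j + 1)) f‖ ^ 2 := by
        gcongr
        exact h.increment_antitone hε hε1 f (by omega)
      have h4 : ((j : ℝ) + 1) * (ε * D ^ 2) ≤
          ((j : ℝ) + 1) * (energy T f j - energy T f (j + 1)) := by
        gcongr
        exact (mul_le_mul_of_nonneg_left h3 hε.le).trans h2
      rw [Finset.sum_range_succ, Finset.sum_range_succ]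
      push_cast
      linarith
  have hsum : (u : ℝ) ^ 2 / 2 ≤ ∑ k ∈ Finset.range u, ((k : ℝ) + 1) := by
    clear key hD D
    induction u with
    | zero => simp
    | succ u ih => rw [Finset.sum_range_succ]; push_cast; nlinarith [ih]
  have h1 := key u le_rfl
  have h2 := h.sum_energy_le hε1 f u
  have h3 : 0 ≤ (u : ℝ) * energy T f u := mul_nonneg (by positivity) (h.energy_nonneg f u)
  have h4 : ε * ((u : ℝ) ^ 2 / 2) * D ^ 2 ≤ ∑ k ∈ Finset.range u, energy T f k := by
    refine le_trans ?_ (h1.trans (by linarith))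
    gcongr
  have h5 : ε * (ε * ((u : ℝ) ^ 2 / 2) * D ^ 2) ≤ ‖f‖ ^ 2 :=
    (mul_le_mul_of_nonneg_left h4 hε.le).trans h2
  have h6 : (ε * (u * D)) ^ 2 ≤ (2 * ‖f‖) ^ 2 := by nlinarith [norm_nonneg f]
  have h7 : ε * (u * D) ≤ 2 * ‖f‖ := (sq_le_sq₀ (by positivity) (by positivity)).1 h6
  rw [div_mul_eq_mul_div, le_div_iff₀ hε]
  linarith

theorem time_diff_le (h : GapOp T ε) (hε : 0 < ε) (hε1 : ε ≤ 1) (f : H) (u m : ℕ) :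
    u * ‖(T ^ (u + m)) f - (T ^ u) f‖ ≤ m * (2 / ε * ‖f‖) := by
  induction m with
  | zero => simp
  | succ m ih =>
    have h1 : (u : ℝ) * ‖(T ^ (u + m)) f - (T ^ (u + m + 1)) f‖ ≤ 2 / ε * ‖f‖ :=
      le_trans (by gcongr; exact h.increment_antitone hε hε1 f (Nat.le_add_right u m))
        (h.increment_le hε hε1 f u)
    have h2 : ‖(T ^ (u + (m + 1))) f - (T ^ u) f‖ ≤
        ‖(T ^ (u + m)) f - (T ^ (u + m + 1)) f‖ + ‖(T ^ (u + m)) f - (T ^ u) f‖ := by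
      rw [norm_sub_rev ((T ^ (u + m)) f) ((T ^ (u + m + 1)) f)]
      exact norm_sub_le_norm_sub_add_norm_sub _ _ _
    have h3 := mul_le_mul_of_nonneg_left h2 (Nat.cast_nonneg (α := ℝ) u)
    rw [Nat.cast_succ]
    linarith

end GapOp

/-! ### The convolution operator on `ℓ²(G)` -/

theorem hasSum_sq {G : Type*} (f : lp (fun _ : G => ℝ) 2) :
    HasSum (fun x => f x ^ 2) (‖f‖ ^ 2) := by
  have h := lp.hasSum_inner (𝕜 := ℝ) f f
  rw [real_inner_self_eq_norm_sq] at h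
  simpa [pow_two] using h

/-- The Dirichlet form of an `ℓ²` function is `⟨(1 - T) f, f⟩`. All three terms of the expanded square
are summable over `G × G`, so no junk value of the sum occurs. -/
theorem dirichletForm_eq {G : Type*} [Group G] {μ : G → ℝ} (hμ : IsSymmProb μ)
    (T : lp (fun _ : G => ℝ) 2 →L[ℝ] lp (fun _ : G => ℝ) 2)
    (hTconv : ∀ f : lp (fun _ : G => ℝ) 2, ∀ x : G, T f x = ∑' y : G, f y * μ (y⁻¹ * x))
    (f : lp (fun _ : G => ℝ) 2) : dirichletForm μ f = ‖f‖ ^ 2 - ⟪T f, f⟫ := by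
  obtain ⟨hpos, hsum, h1, hsymm⟩ := hμ
  have hμs : HasSum μ 1 := h1 ▸ hsum.hasSum
  have hA : HasSum (fun q : G × G => f q.1 ^ 2 * μ q.2) (‖f‖ ^ 2) := by
    have := (hasSum_sq f).mul hμs
      ((hasSum_sq f).summable.mul_of_nonneg hsum (fun x => sq_nonneg _) hpos)
    simpa using this
  let e : G × G ≃ G × G :=
    { toFun := fun q => (q.1 * q.2, q.2)
      invFun := fun q => (q.1 * q.2⁻¹, q.2)
      left_inv := fun q => by simp
      right_inv := fun q => by simp }
  have hB : HasSum (fun q : G × G => f (q.1 * q.2) ^ 2 * μ q.2) (‖f‖ ^ 2) :=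
    (e.hasSum_iff (f := fun q : G × G => f q.1 ^ 2 * μ q.2)).2 hA
  have hCs : Summable (fun q : G × G => f q.1 * f (q.1 * q.2) * μ q.2) := by
    refine Summable.of_norm_bounded (hA.summable.add hB.summable) fun q => ?_
    rw [← add_mul, Real.norm_eq_abs, abs_mul, abs_of_nonneg (hpos q.2)]
    refine mul_le_mul_of_nonneg_right ?_ (hpos q.2)
    exact abs_le.2 ⟨by nlinarith [sq_nonneg (f q.1 + f (q.1 * q.2))],
      by nlinarith [sq_nonneg (f q.1 - f (q.1 * q.2))]⟩
  have hCv : ∑' q : G × G, f q.1 * f (q.1 * q.2) * μ q.2 = ⟪T f, f⟫ := by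
    rw [hCs.tsum_prod, lp.inner_eq_tsum]
    refine tsum_congr fun x => ?_
    simp only [mul_assoc, tsum_mul_left]
    have h2 : ∑' y, f (x * y) * μ y = T f x := by
      rw [hTconv, ← (Equiv.mulLeft x).tsum_eq fun z => f z * μ (z⁻¹ * x)]
      refine tsum_congr fun y => ?_
      rw [← hsymm y]
      simp
    rw [h2]
    simp
  have hC : HasSum (fun q : G × G => f q.1 * f (q.1 * q.2) * μ q.2) ⟪T f, f⟫ :=
    hCv ▸ hCs.hasSum
  have hD := ((hB.add hA).sub (hC.mul_left 2)).tsum_eq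
  have hE : ∑' q : G × G, (f (q.1 * q.2) - f q.1) ^ 2 * μ q.2 =
      ‖f‖ ^ 2 + ‖f‖ ^ 2 - 2 * ⟪T f, f⟫ := by
    rw [← hD]
    exact tsum_congr fun q => by ring
  rw [dirichletForm, hE]
  ring

theorem dirichletForm_nonneg {G : Type*} [Group G] {μ : G → ℝ} (hμ : IsSymmProb μ)
    (f : G → ℝ) : 0 ≤ dirichletForm μ f :=
  mul_nonneg (by norm_num) (tsum_nonneg fun q => mul_nonneg (sq_nonneg _) (hμ.1 q.2))

/-- The lower bound comes from the spectrum, the upper bound from positivity of the Dirichlet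
form. -/
theorem gapOp_of_spectrum {G : Type*} [Group G] {ε : ℝ} {μ : G → ℝ} (hμ : IsSymmProb μ)
    (T : lp (fun _ : G => ℝ) 2 →L[ℝ] lp (fun _ : G => ℝ) 2)
    (hTconv : ∀ f : lp (fun _ : G => ℝ) 2, ∀ x : G, T f x = ∑' y : G, f y * μ (y⁻¹ * x))
    (hTsa : IsSelfAdjoint T) (hspec : spectrum ℝ T ⊆ Set.Icc (-1 + ε) 1) : GapOp T ε := by
  have hs : ∀ x y, ⟪T x, y⟫ = ⟪x, T y⟫ :=
    ContinuousLinearMap.isSelfAdjoint_iff_isSymmetric.1 hTsa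
  refine ⟨hs, rayleigh_lower T hs _ fun c hc hmem => ?_, fun f => ?_⟩
  · exact absurd (hspec hmem).1 (not_le.2 hc)
  · have := dirichletForm_nonneg hμ f
    rw [dirichletForm_eq hμ T hTconv] at this
    linarith

/-- The point mass at `x`, as an element of `ℓ²(G)`. -/
def pointMass {G : Type*} (x : G) : lp (fun _ : G => ℝ) 2 := lp.single 2 x 1

theorem inner_pointMass {G : Type*} (x : G) (f : lp (fun _ : G => ℝ) 2) :
    ⟪pointMass x, f⟫ = f x := by
  rw [pointMass, lp.inner_single_left]
  simp

/-- Translates of the convolution powers are the orbits of point masses under `T`. -/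
theorem pow_pointMass {G : Type*} [Group G] {μ : G → ℝ}
    (T : lp (fun _ : G => ℝ) 2 →L[ℝ] lp (fun _ : G => ℝ) 2)
    (hTconv : ∀ f : lp (fun _ : G => ℝ) 2, ∀ x : G, T f x = ∑' y : G, f y * μ (y⁻¹ * x))
    (k : ℕ) (x z : G) : (T ^ k) (pointMass x) z = convPow μ k (x⁻¹ * z) := by
  induction k generalizing z with
  | zero =>
    by_cases h : z = x
    · subst h; simp [pointMass, convPow]
    · have h' : x⁻¹ * z ≠ 1 := fun h1 => h (inv_mul_eq_one.1 h1).symm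
      simp [pointMass, convPow, Pi.single_eq_of_ne h, h']
  | succ k ih =>
    rw [pow_succ', mul_apply_eq_comp, hTconv, convPow,
      ← (Equiv.mulLeft x).tsum_eq fun y => (T ^ k) (pointMass x) y * μ (y⁻¹ * z)]
    refine tsum_congr fun w => ?_
    simp only [ih, Equiv.coe_mulLeft, inv_mul_cancel_left, mul_inv_rev, mul_assoc]

/-- The pseudo-Poincaré inequality extends from finitely supported functions to `ℓ²(G)`: truncations
converge in norm, and every finite partial sum of the left side passes to the limit. -/
theorem pseudoPoincare_l2 {G : Type*} [Group G] {μ : G → ℝ} (hμ : IsSymmProb μ)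
    (T : lp (fun _ : G => ℝ) 2 →L[ℝ] lp (fun _ : G => ℝ) 2)
    (hTconv : ∀ f : lp (fun _ : G => ℝ) 2, ∀ x : G, T f x = ∑' y : G, f y * μ (y⁻¹ * x))
    (R : ℝ) (g : G)
    (hPP : ∀ f : G → ℝ, (Function.support f).Finite →
      ∑' x, (f (x * g) - f x) ^ 2 ≤ R * dirichletForm μ f)
    (f : lp (fun _ : G => ℝ) 2) :
    ∑' x, (f (x * g) - f x) ^ 2 ≤ R * (‖f‖ ^ 2 - ⟪T f, f⟫) := by
  refine Real.tsum_le_of_sum_le (fun x => sq_nonneg _) fun s => ?_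
  have hlim : Filter.Tendsto (fun t : Finset G => ∑ i ∈ t, lp.single 2 i (f i)) Filter.atTop
      (nhds f) := lp.hasSum_single (by norm_num) f
  have hev : Continuous fun h : lp (fun _ : G => ℝ) 2 => (h : G → ℝ) :=
    lp.uniformContinuous_coe.continuous
  have hcoord : ∀ x : G, Continuous fun h : lp (fun _ : G => ℝ) 2 => (h x : ℝ) :=
    fun x => (continuous_apply x).comp hev
  have hL : Continuous fun h : lp (fun _ : G => ℝ) 2 => ∑ x ∈ s, (h (x * g) - h x) ^ 2 :=
    continuous_finsetSum _ fun x _ => ((hcoord (x * g)).sub (hcoord x)).pow 2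
  have hR : Continuous fun h : lp (fun _ : G => ℝ) 2 => R * (‖h‖ ^ 2 - ⟪T h, h⟫) := by
    fun_prop
  refine le_of_tendsto_of_tendsto' ((hL.tendsto f).comp hlim) ((hR.tendsto f).comp hlim)
    fun t => ?_
  set h : lp (fun _ : G => ℝ) 2 := ∑ i ∈ t, lp.single 2 i (f i) with hh
  have hsupp : (Function.support h).Finite := by
    refine t.finite_toSet.subset fun x hx => ?_
    by_contra hxt
    refine hx ?_
    rw [hh, lp.coeFn_sum, Finset.sum_apply]
    refine Finset.sum_eq_zero fun i hi => ?_
    exact lp.single_apply_ne 2 i _ fun hxi => hxt (hxi ▸ hi)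
  have hsum : Summable fun x => (h (x * g) - h x) ^ 2 := by
    refine summable_of_hasFiniteSupport ?_
    refine ((hsupp.preimage (mul_left_injective g).injOn).union hsupp).subset fun x hx => ?_
    by_contra hxn
    simp only [Set.mem_union, Set.mem_preimage, Function.mem_support, not_or, not_not] at hxn
    exact hx (by simp [hxn.1, hxn.2])
  have := hPP h hsupp
  rw [dirichletForm_eq hμ T hTconv] at this
  exact (hsum.sum_le_tsum s fun x _ => sq_nonneg _).trans this

/-! ### Space-time regularity -/

/-- space-time regularity of convolution powers under a spectral gap
and a pointwise pseudo-Poincaré inequality. -/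
theorem stmt18 {G : Type*} [Group G] [Countable G]
    (ε : ℝ) (hε : 0 < ε) (hε1 : ε ≤ 1)
    (μ : G → ℝ) (hμ : IsSymmProb μ)
    (T : lp (fun _ : G => ℝ) 2 →L[ℝ] lp (fun _ : G => ℝ) 2)
    (hTconv : ∀ f : lp (fun _ : G => ℝ) 2, ∀ x : G,
      T f x = ∑' y : G, f y * μ (y⁻¹ * x))
    (hTsa : IsSelfAdjoint T)
    (hspec : spectrum ℝ T ⊆ Set.Icc (-1 + ε) 1)
    (N : G → ℝ) (A : ℝ) (hN : IsQuasiNorm N A)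
    (ρ : ℝ → ℝ) (hρcont : ContinuousOn ρ (Set.Ioi 0))
    (hρmono : MonotoneOn ρ (Set.Ioi 0)) (hρpos : ∀ t : ℝ, 0 < t → 0 < ρ t)
    (C : ℝ) (hC : 0 < C)
    (hPP : ∀ f : G → ℝ, (Function.support f).Finite → ∀ g : G,
      ∑' x, (f (x * g) - f x) ^ 2 ≤ C * ρ (N g) * dirichletForm μ f) :
    ∃ Cε : ℝ, ∀ u v : ℕ, 0 < u → 0 < v → ∀ m : ℕ, ∀ x y : G,
      |convPow μ (u + 2 * v + m) (x * y) - convPow μ (u + 2 * v) x| ≤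
        Cε * ((m : ℝ) / u + Real.sqrt (C * ρ (N y) / u)) * convPow μ (2 * v) 1 := by
  have hgap := gapOp_of_spectrum hμ T hTconv hTsa hspec
  have hval := pow_pointMass T hTconv
  refine ⟨2 / ε, fun u v hu _ m x y => ?_⟩
  have hu' : (0 : ℝ) < u := by exact_mod_cast hu
  -- `T` commutes with left translations, so every `T ^ v δ_z` has the same norm
  have hnorm : ∀ z : G, ‖(T ^ v) (pointMass z)‖ ^ 2 = convPow μ (2 * v) 1 := by
    intro z
    rw [← real_inner_self_eq_norm_sq, hgap.symm_pow, ← mul_apply_eq_comp, ← pow_add,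
      inner_pointMass, hval, inv_mul_cancel, two_mul]
  have hprod : ∀ z w : G, ‖(T ^ v) (pointMass z)‖ * ‖(T ^ v) (pointMass w)‖ =
      convPow μ (2 * v) 1 := by
    intro z w
    have : ‖(T ^ v) (pointMass z)‖ = ‖(T ^ v) (pointMass w)‖ := by
      rw [← sq_eq_sq₀ (norm_nonneg _) (norm_nonneg _), hnorm, hnorm]
    rw [this, ← pow_two, hnorm]
  have hsymm : ∀ (k : ℕ) (z : G), convPow μ k z⁻¹ = convPow μ k z := by
    intro k z
    have h1 := hgap.symm_pow k (pointMass z) (pointMass 1)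
    rw [real_inner_comm, inner_pointMass, inner_pointMass, hval, hval] at h1
    simpa using h1
  have hsplit : ∀ (k : ℕ) (w z : G), convPow μ (v + k) (w⁻¹ * z) =
      ⟪(T ^ k) (pointMass w), (T ^ v) (pointMass z)⟫ := by
    intro k w z
    rw [← hval, pow_add, mul_apply_eq_comp, ← inner_pointMass, ← hgap.symm_pow, real_inner_comm]
  have htime : |convPow μ (u + 2 * v + m) x - convPow μ (u + 2 * v) x| ≤
      2 / ε * ((m : ℝ) / u) * convPow μ (2 * v) 1 := by
    set a := (T ^ v) (pointMass (1 : G)) with ha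
    have h1 := hgap.time_diff_le hε hε1 a u m
    have e1 : convPow μ (u + 2 * v + m) x = ⟪(T ^ (u + m)) a, (T ^ v) (pointMass x)⟫ := by
      rw [ha, ← mul_apply_eq_comp, ← pow_add, ← hsplit]
      congr 1
      · ring
      · simp
    have e2 : convPow μ (u + 2 * v) x = ⟪(T ^ u) a, (T ^ v) (pointMass x)⟫ := by
      rw [ha, ← mul_apply_eq_comp, ← pow_add, ← hsplit]
      congr 1
      · ring
      · simp
    rw [e1, e2, ← inner_sub_left, ← hprod 1 x, ← ha]
    refine (abs_real_inner_le_norm _ _).trans ?_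
    rw [← mul_assoc]
    refine mul_le_mul_of_nonneg_right ?_ (norm_nonneg _)
    rw [mul_comm, ← le_div_iff₀ hu'] at h1
    exact h1.trans (le_of_eq (by ring))
  have hspace : |convPow μ (u + 2 * v + m) (x * y) - convPow μ (u + 2 * v + m) x| ≤
      2 / ε * √(C * ρ (N y) / u) * convPow μ (2 * v) 1 := by
    set a := (T ^ v) (pointMass (1 : G)) with ha
    set k := u + v + m with hk
    set F := (T ^ k) (pointMass (1 : G)) with hF
    have e : ∀ z : G, convPow μ (u + 2 * v + m) (x * z) =
        ⟪(T ^ k) (pointMass z), (T ^ v) (pointMass x⁻¹)⟫ := by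
      intro z
      rw [← hsplit, ← hsymm, hk]
      congr 1
      · ring
      · simp
    have e1 := e 1
    rw [mul_one] at e1
    rw [e, e1, ← inner_sub_left, ← hprod 1 x⁻¹, ← ha]
    refine (abs_real_inner_le_norm _ _).trans ?_
    rw [← mul_assoc]
    refine mul_le_mul_of_nonneg_right ?_ (norm_nonneg _)
    -- inversion turns the left translation by `y` into a right translation of `F`
    have h1 : ‖(T ^ k) (pointMass y) - F‖ ^ 2 = ∑' z, (F (z * y) - F z) ^ 2 := by
      rw [← (hasSum_sq _).tsum_eq, ← (Equiv.inv G).tsum_eq]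
      refine tsum_congr fun z => ?_
      rw [lp.coeFn_sub, Pi.sub_apply, hF, hval, hval, hval, hval, ← hsymm k (1⁻¹ * (z * y)),
        ← hsymm k (1⁻¹ * z)]
      simp
    have h2 := pseudoPoincare_l2 hμ T hTconv (C * ρ (N y)) y (fun f hf => hPP f hf y) F
    have h3 : ‖F‖ ^ 2 - ⟪T F, F⟫ = GapOp.energy T a (u + m) := by
      rw [GapOp.energy, ha, ← mul_apply_eq_comp (T ^ (u + m)), ← pow_add, hF, hk,
        add_right_comm u m v]
    have h4 : ε * (u * GapOp.energy T a (u + m)) ≤ ‖a‖ ^ 2 :=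
      le_trans (by gcongr; exact hgap.energy_antitone hε a (Nat.le_add_right u m))
        (hgap.energy_le hε hε1 a u)
    have h0 := hgap.energy_nonneg a (u + m)
    rw [← h1, h3] at h2
    refine (sq_le_sq₀ (norm_nonneg _) (by positivity)).1 (h2.trans ?_)
    -- `ρ (N y)` has no sign when `N y = 0`, and then `√` may take its value `0` at negatives
    rcases le_or_gt (C * ρ (N y)) 0 with hR | hR
    · exact (mul_nonpos_of_nonpos_of_nonneg hR h0).trans (sq_nonneg _)
    · rw [mul_pow, mul_pow, Real.sq_sqrt (by positivity)]
      have h5 : GapOp.energy T a (u + m) ≤ 1 / ε * (1 / u * ‖a‖ ^ 2) := by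
        rw [← mul_assoc, ← le_div_iff₀' (by positivity)] at h4
        exact h4.trans (le_of_eq (by field_simp))
      have h6 : 1 / ε ≤ (2 / ε) ^ 2 := by
        rw [div_pow, div_le_div_iff₀ hε (by positivity)]
        nlinarith
      calc C * ρ (N y) * GapOp.energy T a (u + m)
          ≤ C * ρ (N y) * ((2 / ε) ^ 2 * (1 / u * ‖a‖ ^ 2)) := by
            gcongr
            exact h5.trans (by gcongr)
        _ = _ := by ring
  calc |convPow μ (u + 2 * v + m) (x * y) - convPow μ (u + 2 * v) x|
      ≤ |convPow μ (u + 2 * v + m) (x * y) - convPow μ (u + 2 * v + m) x| +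
        |convPow μ (u + 2 * v + m) x - convPow μ (u + 2 * v) x| := abs_sub_le _ _ _
    _ ≤ _ := add_le_add hspace htime
    _ = _ := by ring
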